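/- Let X be a compact Hausdorff space, let μ be a regular Borel probability measure on X, and let 𝒞 be a family of clopen subsets of X with finite VC dimension, i.e. there is a natural number d such that no d-element subset of X is shattered by 𝒞. Then for every ε > 0 there exist k ≥ 1 and a closed subset B of X^k with (μ^k)(B) > 0 (where μ^k is the product measure on X^k) such that for every (p₁,…,p_k) ∈ B and every A ∈ 𝒞, |fr_k(A, (p₁,…,p_k)) − μ(A)| ≤ ε; that is, every tuple in B simultaneously ε-approximates the μ-measure of every set in the family 𝒞 by frequencies. -/

import Mathlib

open MeasureTheory

/-- A family `C` of subsets of `X` shatters a finite set `F` if every subset of `F`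
is of the form `F ∩ A` for some `A ∈ C`. -/
def Shatters {X : Type*} (C : Set (Set X)) (F : Finset X) : Prop :=
  ∀ S : Finset X, S ⊆ F → ∃ A ∈ C, (F : Set X) ∩ A = (S : Set X)

open Classical in
/-- `freq k A p` is the proportion of coordinates of the `k`-tuple `p` lying in `A`. -/
noncomputable def freq {X : Type*} (k : ℕ) (A : Set X) (p : Fin k → X) : ℝ :=
  ((Finset.univ.filter fun i => p i ∈ A).card : ℝ) / k

/-! Symmetrizing with an independent second sample and random signs bounds the expected uniform
deviation of the frequencies from the probabilities by that of a random signed sum. By the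
Sauer–Shelah lemma only polynomially many vectors enter that sum, so Massart's exponential moment
argument bounds the expected deviation of the counts by `vcBound d k = O(√(d k log k))`, uniformly
over the finite subfamilies of `C`. After division by `k` this tends to `0`, so by Markov's
inequality the tuples failing on a given finite subfamily have uniformly small measure.

The tuples approximating `μ` on `C` form an intersection of closed sets, over a family which may be
uncountable. By compactness an open set containing this intersection contains a large compact set
up to finitely many of the constraints, and outer regularity of the product measure passes to the
intersection itself. The latter need not be measurable for the product `σ`-algebra.
-/

open Filter Set
open scoped Topology BigOperators

section Rademacher

variable {ι : Type*} [Fintype ι] [DecidableEq ι]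

lemma expect_exp_sum_units_smul (a : ι → ℝ) (l : ℝ) :
    𝔼 s : ι → ℤˣ, Real.exp (l * ∑ i, s i • a i) = ∏ i, Real.cosh (l * a i) := by
  have hcosh (x : ℝ) : ∑ u : ℤˣ, Real.exp (l * u • x) = 2 * Real.cosh (l * x) := by
    rw [UnitsInt.univ, Finset.sum_pair (by decide), Real.cosh_eq, one_smul, Units.neg_smul,
      one_smul, mul_neg]
    ring
  have hsum : ∑ s : ι → ℤˣ, Real.exp (l * ∑ i, s i • a i) =
      ∏ i, ∑ u : ℤˣ, Real.exp (l * u • a i) := by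
    simp only [Finset.mul_sum, Real.exp_sum, Finset.prod_univ_sum, Fintype.piFinset_univ]
  rw [Fintype.expect_eq_sum_div_card, hsum]
  simp only [hcosh, Finset.prod_mul_distrib, Finset.prod_const, Finset.card_univ, Fintype.card_fun,
    Fintype.card_units_int]
  field_simp
  simp

lemma expect_exp_sum_units_smul_le (a : ι → ℝ) (l : ℝ) :
    𝔼 s : ι → ℤˣ, Real.exp (l * ∑ i, s i • a i) ≤ Real.exp (l ^ 2 * (∑ i, a i ^ 2) / 2) := by
  calc 𝔼 s : ι → ℤˣ, Real.exp (l * ∑ i, s i • a i)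
      = ∏ i, Real.cosh (l * a i) := expect_exp_sum_units_smul a l
    _ ≤ ∏ i, Real.exp ((l * a i) ^ 2 / 2) :=
        Finset.prod_le_prod (fun i _ => (Real.cosh_pos _).le)
          fun i _ => Real.cosh_le_exp_half_sq _
    _ = Real.exp (l ^ 2 * (∑ i, a i ^ 2) / 2) := by
        simp only [← Real.exp_sum, mul_pow, Finset.mul_sum, Finset.sum_div]

lemma expect_exp_abs_sum_units_smul_le (a : ι → ℝ) (l : ℝ) :
    𝔼 s : ι → ℤˣ, Real.exp (l * |∑ i, s i • a i|) ≤
      2 * Real.exp (l ^ 2 * (∑ i, a i ^ 2) / 2) := by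
  have hexp (x : ℝ) : Real.exp (l * |x|) ≤ Real.exp (l * x) + Real.exp (-l * x) := by
    rcases abs_choice x with h | h <;> rw [h]
    · exact le_add_of_nonneg_right (Real.exp_nonneg _)
    · rw [mul_neg, neg_mul]
      exact le_add_of_nonneg_left (Real.exp_nonneg _)
  calc 𝔼 s : ι → ℤˣ, Real.exp (l * |∑ i, s i • a i|)
      ≤ 𝔼 s : ι → ℤˣ, (Real.exp (l * ∑ i, s i • a i) + Real.exp (-l * ∑ i, s i • a i)) :=
        Finset.expect_le_expect fun s _ => hexp _
    _ ≤ Real.exp (l ^ 2 * (∑ i, a i ^ 2) / 2) + Real.exp ((-l) ^ 2 * (∑ i, a i ^ 2) / 2) := by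
        rw [Finset.expect_add_distrib]
        exact add_le_add (expect_exp_sum_units_smul_le a l) (expect_exp_sum_units_smul_le a (-l))
    _ = 2 * Real.exp (l ^ 2 * (∑ i, a i ^ 2) / 2) := by rw [neg_sq, two_mul]

lemma exp_expect_le {Ω : Type*} [Fintype Ω] [Nonempty Ω] (f : Ω → ℝ) :
    Real.exp (𝔼 ω, f ω) ≤ 𝔼 ω, Real.exp (f ω) := by
  have hcard : (Fintype.card Ω : ℝ) ≠ 0 := by positivity
  have := convexOn_exp.map_sum_le (t := Finset.univ) (w := fun _ : Ω => (Fintype.card Ω : ℝ)⁻¹)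
    (p := f) (fun _ _ => by positivity) (by simp [hcard]) fun _ _ => mem_univ _
  simpa [Fintype.expect_eq_sum_div_card, div_eq_inv_mul, Finset.mul_sum] using this

variable {T : Finset (ι → ℝ)} {V : ℝ} {a : (ι → ℤˣ) → ι → ℝ}

lemma mul_expect_abs_sum_units_smul_le (hT : ∀ v ∈ T, ∑ i, v i ^ 2 ≤ V) (ha : ∀ s, a s ∈ T)
    (l : ℝ) :
    l * 𝔼 s, |∑ i, s i • a s i| ≤ Real.log (2 * T.card) + l ^ 2 * V / 2 := by
  have hcard : (0 : ℝ) < T.card := by exact_mod_cast Finset.card_pos.2 ⟨a 1, ha 1⟩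
  rw [← Real.exp_le_exp, Real.exp_add, Real.exp_log (by positivity), Finset.mul_expect]
  calc Real.exp (𝔼 s, l * |∑ i, s i • a s i|)
      ≤ 𝔼 s, Real.exp (l * |∑ i, s i • a s i|) := exp_expect_le _
    _ ≤ 𝔼 s : ι → ℤˣ, ∑ v ∈ T, Real.exp (l * |∑ i, s i • v i|) :=
        Finset.expect_le_expect fun s _ =>
          Finset.single_le_sum (f := fun v : ι → ℝ => Real.exp (l * |∑ i, s i • v i|))
            (fun v _ => (Real.exp_nonneg _)) (ha s)
    _ = ∑ v ∈ T, 𝔼 s : ι → ℤˣ, Real.exp (l * |∑ i, s i • v i|) := Finset.expect_sum_comm _ _ _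
    _ ≤ ∑ v ∈ T, 2 * Real.exp (l ^ 2 * V / 2) := by
        refine Finset.sum_le_sum fun v hv => (expect_exp_abs_sum_units_smul_le v l).trans ?_
        gcongr
        exact hT v hv
    _ = 2 * T.card * Real.exp (l ^ 2 * V / 2) := by
        rw [Finset.sum_const, nsmul_eq_mul]
        ring

lemma expect_abs_sum_units_smul_le (hT : ∀ v ∈ T, ∑ i, v i ^ 2 ≤ V) (ha : ∀ s, a s ∈ T) :
    𝔼 s, |∑ i, s i • a s i| ≤ √(2 * V * Real.log (2 * T.card)) := by
  -- The bound by `log (2 |T|) + l ^ 2 V / 2` holds for every `l`, so the discriminant is `≤ 0`.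
  have hdiscrim : discrim (V / 2) (-𝔼 s, |∑ i, s i • a s i|) (Real.log (2 * T.card)) ≤ 0 :=
    discrim_le_zero fun l => by linarith [mul_expect_abs_sum_units_smul_le hT ha l]
  refine Real.le_sqrt_of_sq_le ?_
  rw [discrim] at hdiscrim
  linarith

end Rademacher

section SauerShelah

variable {X ι : Type*} [Fintype ι] {C : Set (Set X)} {d : ℕ}

lemma Shatters.mono {C' : Set (Set X)} {F : Finset X} (h : Shatters C F) (hC : C ⊆ C') :
    Shatters C' F := fun S hS =>
  let ⟨A, hA, hFA⟩ := h S hS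
  ⟨A, hC hA, hFA⟩

open Classical in
/-- The traces of the family `C` on the points `z i`, recorded as sets of indices so that `z` need
not be injective. -/
noncomputable def traces (C : Set (Set X)) (z : ι → X) : Finset (Finset ι) :=
  {t | ∃ A ∈ C, ∀ i, i ∈ t ↔ z i ∈ A}

lemma mem_traces {z : ι → X} {t : Finset ι} :
    t ∈ traces C z ↔ ∃ A ∈ C, ∀ i, i ∈ t ↔ z i ∈ A := by
  simp [traces]

lemma injOn_of_shatters_traces [DecidableEq ι] {z : ι → X} {t : Finset ι}
    (ht : (traces C z).Shatters t) :
    InjOn z t := by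
  intro i hi j hj hij
  obtain ⟨v, hv, hvi⟩ := ht (t := {i}) (by simpa using hi)
  obtain ⟨A, -, hA⟩ := mem_traces.1 hv
  have hiv : i ∈ v := Finset.mem_of_mem_inter_right (hvi ▸ Finset.mem_singleton_self i)
  have hjv : j ∈ v := (hA j).2 (hij ▸ (hA i).1 hiv)
  exact (Finset.mem_singleton.1 (hvi ▸ Finset.mem_inter.2 ⟨hj, hjv⟩)).symm

lemma shatters_image_of_shatters_traces [DecidableEq ι] [DecidableEq X] {z : ι → X} {t : Finset ι}
    (ht : (traces C z).Shatters t) : Shatters C (t.image z) := by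
  intro S hS
  obtain ⟨v, hv, htv⟩ := ht (Finset.filter_subset (fun i => z i ∈ S) t)
  obtain ⟨A, hAC, hA⟩ := mem_traces.1 hv
  have hAS (i) (hi : i ∈ t) : z i ∈ A ↔ z i ∈ S := by
    simpa [hi, hA] using Finset.ext_iff.1 htv i
  refine ⟨A, hAC, Set.ext fun x => ⟨?_, fun hx => ?_⟩⟩
  · rintro ⟨hx, hxA⟩
    obtain ⟨i, hi, rfl⟩ := Finset.mem_image.1 hx
    exact (hAS i hi).1 hxA
  · obtain ⟨i, hi, rfl⟩ := Finset.mem_image.1 (hS hx)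
    exact ⟨hS hx, (hAS i hi).2 hx⟩

lemma vcDim_traces_le [DecidableEq ι] (hVC : ∀ F : Finset X, F.card = d → ¬ Shatters C F)
    (z : ι → X) : (traces C z).vcDim ≤ d := by
  classical
  refine Finset.sup_le fun t ht => le_of_not_gt fun hdt => ?_
  obtain ⟨u, hut, rfl⟩ := Finset.exists_subset_card_eq hdt.le
  have hu := (Finset.mem_shatterer.1 ht).mono_right hut
  exact hVC _ (Finset.card_image_of_injOn (injOn_of_shatters_traces hu))
    (shatters_image_of_shatters_traces hu)

lemma sum_Iic_choose_le_add_one_pow (n d : ℕ) :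
    ∑ j ∈ Finset.Iic d, n.choose j ≤ (n + 1) ^ d := by
  rw [add_pow, Nat.range_succ_eq_Iic]
  refine Finset.sum_le_sum fun j hj => (Nat.choose_le_pow n j).trans ?_
  rw [one_pow, mul_one]
  exact Nat.le_mul_of_pos_right _ (Nat.choose_pos (Finset.mem_Iic.1 hj))

lemma card_traces_le (hVC : ∀ F : Finset X, F.card = d → ¬ Shatters C F) (z : ι → X) :
    (traces C z).card ≤ (Fintype.card ι + 1) ^ d := by
  classical
  calc (traces C z).card
      ≤ ∑ j ∈ Finset.Iic (traces C z).vcDim, (Fintype.card ι).choose j :=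
        (Finset.card_le_card_shatterer _).trans Finset.card_shatterer_le_sum_vcDim
    _ ≤ ∑ j ∈ Finset.Iic d, (Fintype.card ι).choose j :=
        Finset.sum_le_sum_of_subset (Finset.Iic_subset_Iic.2 (vcDim_traces_le hVC z))
    _ ≤ (Fintype.card ι + 1) ^ d := sum_Iic_choose_le_add_one_pow _ d

lemma exists_finset_indicator_sub_mem (hVC : ∀ F : Finset X, F.card = d → ¬ Shatters C F)
    (y : ι → X × X) :
    ∃ T : Finset (ι → ℝ), T.card ≤ (2 * Fintype.card ι + 1) ^ d ∧
      ∀ A ∈ C, (fun i => A.indicator 1 (y i).1 - A.indicator 1 (y i).2) ∈ T := by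
  classical
  let z : ι ⊕ ι → X := Sum.elim (fun i => (y i).1) fun i => (y i).2
  let diff (t : Finset (ι ⊕ ι)) (i : ι) : ℝ :=
    (if Sum.inl i ∈ t then 1 else 0) - if Sum.inr i ∈ t then 1 else 0
  refine ⟨(traces C z).image diff, ?_, fun A hA => ?_⟩
  · refine Finset.card_image_le.trans ((card_traces_le hVC z).trans_eq ?_)
    rw [Fintype.card_sum, two_mul]
  · refine Finset.mem_image.2
      ⟨({q | z q ∈ A} : Finset (ι ⊕ ι)), mem_traces.2 ⟨A, hA, by simp⟩, ?_⟩
    funext i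
    simp [diff, z, indicator_apply]

end SauerShelah

section Symmetrization

variable {X Y ι J : Type*}

/-- Exchanges the two entries of a pair when the sign is `-1`: the action of the signs on a pair of
independent samples under which symmetrized sums change sign. -/
def signedSwap (u : ℤˣ) (q : X × X) : X × X := if u = 1 then q else q.swap

lemma sub_signedSwap (f : X → ℝ) (u : ℤˣ) (q : X × X) :
    f (signedSwap u q).1 - f (signedSwap u q).2 = u • (f q.1 - f q.2) := by
  rcases Int.units_eq_one_or u with rfl | rfl <;> simp [signedSwap]

variable [MeasurableSpace X] [MeasurableSpace Y] [Fintype ι] [Countable J]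

lemma lintegral_iSup_enorm_sub_integral_le (ρ : Measure Y) [IsProbabilityMeasure ρ]
    {g : J → Y → ℝ} (hg : ∀ j, Measurable (g j)) (hgi : ∀ j, Integrable (g j) ρ) :
    ∫⁻ y, ⨆ j, ‖g j y - ∫ y', g j y' ∂ρ‖ₑ ∂ρ ≤
      ∫⁻ q, ⨆ j, ‖g j q.1 - g j q.2‖ₑ ∂(ρ.prod ρ) := by
  have hmeas : Measurable fun q : Y × Y => ⨆ j, ‖g j q.1 - g j q.2‖ₑ := by fun_prop
  rw [lintegral_prod _ hmeas.aemeasurable]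
  refine lintegral_mono fun y => iSup_le fun j => ?_
  have hcenter : g j y - ∫ y', g j y' ∂ρ = ∫ y', (g j y - g j y') ∂ρ := by
    rw [integral_sub (integrable_const _) (hgi j), integral_const, probReal_univ, one_smul]
  calc ‖g j y - ∫ y', g j y' ∂ρ‖ₑ
      ≤ ∫⁻ y', ‖g j y - g j y'‖ₑ ∂ρ := hcenter ▸ enorm_integral_le_lintegral_enorm _
    _ ≤ ∫⁻ y', ⨆ j, ‖g j y - g j y'‖ₑ ∂ρ :=
        lintegral_mono fun y' => le_iSup (fun j => ‖g j y - g j y'‖ₑ) j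

lemma measurePreserving_signedSwap (μ : Measure X) [SFinite μ] (u : ℤˣ) :
    MeasurePreserving (signedSwap u) (μ.prod μ) (μ.prod μ) := by
  rcases Int.units_eq_one_or u with rfl | rfl
  · exact MeasurePreserving.id _
  · exact Measure.measurePreserving_swap

lemma lintegral_iSup_enorm_sum_sub_sum_eq (μ : Measure X) [SigmaFinite μ] {f : J → X → ℝ}
    (hf : ∀ j, Measurable (f j)) (s : ι → ℤˣ) :
    ∫⁻ q, ⨆ j, ‖∑ i, f j (q.1 i) - ∑ i, f j (q.2 i)‖ₑ
        ∂((Measure.pi fun _ : ι => μ).prod (Measure.pi fun _ : ι => μ)) =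
      ∫⁻ y, ⨆ j, ‖∑ i, s i • (f j (y i).1 - f j (y i).2)‖ₑ
        ∂(Measure.pi fun _ : ι => μ.prod μ) := by
  have hmeas : Measurable fun q : (ι → X) × (ι → X) =>
      ⨆ j, ‖∑ i, f j (q.1 i) - ∑ i, f j (q.2 i)‖ₑ := by fun_prop
  have hswap : MeasurePreserving (fun (y : ι → X × X) i => signedSwap (s i) (y i))
      (Measure.pi fun _ => μ.prod μ) (Measure.pi fun _ => μ.prod μ) :=
    measurePreserving_pi _ _ fun i => measurePreserving_signedSwap μ (s i)
  have hunzip := measurePreserving_arrowProdEquivProdArrow X X ι (fun _ => μ) (fun _ => μ)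
  rw [← (hunzip.comp hswap).lintegral_comp hmeas]
  simp only [Function.comp_apply, MeasurableEquiv.arrowProdEquivProdArrow, MeasurableEquiv.coe_mk,
    Equiv.arrowProdEquivProdArrow, Equiv.coe_fn_mk, ← Finset.sum_sub_distrib, sub_signedSwap]

lemma lintegral_iSup_enorm_sum_sub_le (μ : Measure X) [IsProbabilityMeasure μ] {f : J → X → ℝ}
    (hf : ∀ j, Measurable (f j)) (hfi : ∀ j, Integrable (f j) μ) (s : ι → ℤˣ) :
    ∫⁻ p, ⨆ j, ‖∑ i, f j (p i) - Fintype.card ι * ∫ x, f j x ∂μ‖ₑ ∂(Measure.pi fun _ : ι => μ) ≤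
      ∫⁻ y, ⨆ j, ‖∑ i, s i • (f j (y i).1 - f j (y i).2)‖ₑ
        ∂(Measure.pi fun _ : ι => μ.prod μ) := by
  have hintegrable (j : J) (i : ι) :
      Integrable (fun p : ι → X => f j (p i)) (Measure.pi fun _ => μ) :=
    integrable_comp_eval (hfi j)
  have hmean (j : J) : ∫ p : ι → X, ∑ i, f j (p i) ∂(Measure.pi fun _ => μ) =
      Fintype.card ι * ∫ x, f j x ∂μ := by
    rw [integral_finsetSum _ fun i _ => hintegrable j i]
    simp [integral_comp_eval (μ := fun _ : ι => μ) (hfi j).aestronglyMeasurable]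
  rw [← lintegral_iSup_enorm_sum_sub_sum_eq μ hf s]
  simp only [← hmean]
  exact lintegral_iSup_enorm_sub_integral_le _ (fun j => by fun_prop)
    fun j => integrable_finsetSum _ fun i _ => hintegrable j i

end Symmetrization

section VapnikChervonenkis

/-- The bound furnished by Massart's lemma and the Sauer–Shelah lemma for the expected uniform
deviation of the counts over `n` independent sample points, for a family of sets shattering no `d`
points. -/
noncomputable def vcBound (d n : ℕ) : ℝ :=
  √(2 * n * Real.log (2 * (2 * n + 1) ^ d))

lemma tendsto_vcBound_div_natCast (d : ℕ) :
    Tendsto (fun k : ℕ => vcBound d k / k) atTop (𝓝 0) := by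
  have hodd : Tendsto (fun k : ℕ => (2 * k + 1 : ℝ)) atTop atTop :=
    tendsto_atTop_add_const_right _ _
      (tendsto_natCast_atTop_atTop.const_mul_atTop two_pos)
  have hlog : Tendsto (fun k : ℕ => Real.log (2 * (2 * k + 1) ^ d) / k) atTop (𝓝 0) := by
    have hlogodd : Tendsto (fun k : ℕ => Real.log (2 * k + 1) / k) atTop (𝓝 0) := by
      refine ((Real.tendsto_pow_log_div_mul_add_atTop (1 / 2) (-1 / 2) 1 (by norm_num)).comp
        hodd).congr fun k => ?_
      simp only [Function.comp_apply, pow_one]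
      congr 1
      ring
    have hsum :=
      (tendsto_const_div_atTop_nhds_zero_nat (Real.log 2)).add (hlogodd.const_mul (d : ℝ))
    rw [mul_zero, add_zero] at hsum
    refine hsum.congr fun k => ?_
    rw [Real.log_mul two_ne_zero (by positivity), Real.log_pow]
    ring
  have hsqrt := (hlog.const_mul 2).sqrt
  rw [mul_zero, Real.sqrt_zero] at hsqrt
  refine hsqrt.congr fun k => ?_
  rw [vcBound, ← Real.sqrt_sq (Nat.cast_nonneg k : (0 : ℝ) ≤ k),
    ← Real.sqrt_div' _ (sq_nonneg _), Real.sqrt_sq (Nat.cast_nonneg k)]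
  congr 1
  rcases eq_or_ne (k : ℝ) 0 with hk | hk
  · simp [hk]
  · field_simp

variable {X ι J : Type*} [Fintype ι] {C : Set (Set X)} {d : ℕ}

lemma expect_abs_sum_units_smul_indicator_sub_le [DecidableEq ι]
    (hVC : ∀ F : Finset X, F.card = d → ¬ Shatters C F) {A : (ι → ℤˣ) → Set X}
    (hA : ∀ s, A s ∈ C) (y : ι → X × X) :
    𝔼 s, |∑ i, s i • ((A s).indicator 1 (y i).1 - (A s).indicator 1 (y i).2 : ℝ)| ≤
      vcBound d (Fintype.card ι) := by
  classical
  obtain ⟨T, hTcard, hCT⟩ := exists_finset_indicator_sub_mem hVC y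
  have hsq (B : Set X) (q : X × X) : (B.indicator 1 q.1 - B.indicator 1 q.2 : ℝ) ^ 2 ≤ 1 := by
    by_cases h₁ : q.1 ∈ B <;> by_cases h₂ : q.2 ∈ B <;> simp [h₁, h₂]
  let T' : Finset (ι → ℝ) := {v ∈ T | ∑ i, v i ^ 2 ≤ Fintype.card ι}
  have hAT' (s) : (fun i => (A s).indicator 1 (y i).1 - (A s).indicator 1 (y i).2) ∈ T' := by
    refine Finset.mem_filter.2 ⟨hCT _ (hA s), ?_⟩
    simpa using Finset.sum_le_sum fun i (_ : i ∈ Finset.univ) => hsq (A s) (y i)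
  have hT'pos : (0 : ℝ) < T'.card := by exact_mod_cast Finset.card_pos.2 ⟨_, hAT' 1⟩
  have hT'card : (T'.card : ℝ) ≤ (2 * Fintype.card ι + 1) ^ d := by
    exact_mod_cast (Finset.card_filter_le _ _).trans hTcard
  calc 𝔼 s, |∑ i, s i • ((A s).indicator 1 (y i).1 - (A s).indicator 1 (y i).2 : ℝ)|
      ≤ √(2 * Fintype.card ι * Real.log (2 * T'.card)) :=
        expect_abs_sum_units_smul_le (fun v hv => (Finset.mem_filter.1 hv).2) hAT'
    _ ≤ vcBound d (Fintype.card ι) := by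
        unfold vcBound
        gcongr

lemma sum_iSup_enorm_sum_units_smul_indicator_sub_le [DecidableEq ι] [Finite J]
    (hVC : ∀ F : Finset X, F.card = d → ¬ Shatters C F) {A : J → Set X} (hA : ∀ j, A j ∈ C)
    (y : ι → X × X) :
    ∑ s : ι → ℤˣ,
        ⨆ j, ‖∑ i, s i • ((A j).indicator 1 (y i).1 - (A j).indicator 1 (y i).2 : ℝ)‖ₑ ≤
      Fintype.card (ι → ℤˣ) * ENNReal.ofReal (vcBound d (Fintype.card ι)) := by
  rcases isEmpty_or_nonempty J with hJ | hJ
  · simp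
  choose j hj using fun s : ι → ℤˣ => exists_eq_ciSup_of_finite
    (f := fun j => ‖∑ i, s i • ((A j).indicator 1 (y i).1 - (A j).indicator 1 (y i).2 : ℝ)‖ₑ)
  have hexpect := expect_abs_sum_units_smul_indicator_sub_le hVC (fun s => hA (j s)) y
  rw [Fintype.expect_eq_sum_div_card, div_le_iff₀' (by positivity)] at hexpect
  rw [Finset.sum_congr rfl fun s _ => (hj s).symm]
  simp only [Real.enorm_eq_ofReal_abs]
  rw [← ENNReal.ofReal_sum_of_nonneg fun s _ => abs_nonneg _, ← ENNReal.ofReal_natCast,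
    ← ENNReal.ofReal_mul (by positivity)]
  exact ENNReal.ofReal_le_ofReal hexpect

lemma lintegral_iSup_enorm_sum_indicator_sub_le [MeasurableSpace X] (μ : Measure X)
    [IsProbabilityMeasure μ] [Finite J] (hVC : ∀ F : Finset X, F.card = d → ¬ Shatters C F)
    {A : J → Set X} (hA : ∀ j, A j ∈ C) (hAmeas : ∀ j, MeasurableSet (A j)) :
    ∫⁻ p, ⨆ j, ‖∑ i, (A j).indicator 1 (p i) - Fintype.card ι * μ.real (A j)‖ₑ
        ∂(Measure.pi fun _ : ι => μ) ≤
      ENNReal.ofReal (vcBound d (Fintype.card ι)) := by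
  classical
  have hmeas (j : J) : Measurable ((A j).indicator (1 : X → ℝ)) :=
    measurable_one.indicator (hAmeas j)
  have hintegrable (j : J) : Integrable ((A j).indicator (1 : X → ℝ)) μ :=
    (integrable_const 1).indicator (hAmeas j)
  set D := ∫⁻ p, ⨆ j, ‖∑ i, (A j).indicator 1 (p i) - Fintype.card ι * μ.real (A j)‖ₑ
    ∂(Measure.pi fun _ : ι => μ)
  let R (s : ι → ℤˣ) (y : ι → X × X) : ENNReal :=
    ⨆ j, ‖∑ i, s i • ((A j).indicator 1 (y i).1 - (A j).indicator 1 (y i).2 : ℝ)‖ₑ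
  have hsymm (s : ι → ℤˣ) : D ≤ ∫⁻ y, R s y ∂(Measure.pi fun _ : ι => μ.prod μ) := by
    simpa only [integral_indicator_one (hAmeas _)] using
      lintegral_iSup_enorm_sum_sub_le μ hmeas hintegrable s
  refine (ENNReal.mul_le_mul_iff_right (a := Fintype.card (ι → ℤˣ)) (by simp) (by simp)).1 ?_
  calc Fintype.card (ι → ℤˣ) * D
      = ∑ _s : ι → ℤˣ, D := by rw [Finset.sum_const, nsmul_eq_mul, Finset.card_univ]
    _ ≤ ∑ s, ∫⁻ y, R s y ∂(Measure.pi fun _ : ι => μ.prod μ) :=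
        Finset.sum_le_sum fun s _ => hsymm s
    _ = ∫⁻ y, ∑ s, R s y ∂(Measure.pi fun _ : ι => μ.prod μ) :=
        (lintegral_finsetSum _ fun s _ => by fun_prop).symm
    _ ≤ ∫⁻ _, Fintype.card (ι → ℤˣ) * ENNReal.ofReal (vcBound d (Fintype.card ι))
          ∂(Measure.pi fun _ : ι => μ.prod μ) :=
        lintegral_mono fun y => sum_iSup_enorm_sum_units_smul_indicator_sub_le hVC hA y
    _ = Fintype.card (ι → ℤˣ) * ENNReal.ofReal (vcBound d (Fintype.card ι)) := by
        rw [lintegral_const, measure_univ, mul_one]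

end VapnikChervonenkis

section ProductRegularity

variable {ι : Type*} [Fintype ι] {X : ι → Type*} [∀ i, TopologicalSpace (X i)]
  [∀ i, MeasurableSpace (X i)]

lemma exists_isOpen_superset_measure_pi_le (μ : ∀ i, Measure (X i)) [∀ i, IsFiniteMeasure (μ i)]
    [∀ i, (μ i).OuterRegular] (s : ∀ i, Set (X i)) {δ : ENNReal} (hδ : δ ≠ 0) :
    ∃ U : Set (∀ i, X i), univ.pi s ⊆ U ∧ IsOpen U ∧ Measure.pi μ U ≤ ∏ i, μ i (s i) + δ := by
  have htendsto : Tendsto (fun η : ENNReal => ∏ i, (μ i (s i) + η)) (𝓝[>] 0)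
      (𝓝 (∏ i, (μ i (s i) + 0))) :=
    ENNReal.tendsto_finsetProd_of_ne_top _
      (fun i _ => tendsto_const_nhds.add (tendsto_id.mono_left nhdsWithin_le_nhds))
      fun i _ => by finiteness
  simp only [add_zero] at htendsto
  have hlt : ∏ i, μ i (s i) < ∏ i, μ i (s i) + δ :=
    ENNReal.lt_add_right (ENNReal.prod_ne_top fun i _ => measure_ne_top _ _) hδ
  obtain ⟨η, hη, hη0⟩ :=
    ((htendsto.eventually_lt_const hlt).and self_mem_nhdsWithin).exists
  choose U hsU hUo hUη using fun i => (s i).exists_isOpen_le_add (μ i) (ne_of_gt hη0)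
  refine ⟨univ.pi U, pi_mono fun i _ => hsU i, isOpen_set_pi finite_univ fun i _ => hUo i, ?_⟩
  rw [Measure.pi_pi]
  exact (Finset.prod_le_prod' fun i _ => hUη i).trans hη.le

instance outerRegular_pi (μ : ∀ i, Measure (X i)) [∀ i, IsFiniteMeasure (μ i)]
    [∀ i, (μ i).OuterRegular] : (Measure.pi μ).OuterRegular where
  outerRegular B hB r hr := by
    rcases isEmpty_or_nonempty ι with hι | hι
    · exact ⟨B, Subset.rfl, isOpen_discrete B, hr⟩
    have hempty : piPremeasure (fun i => (μ i).toOuterMeasure) ∅ = 0 := by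
      simp [piPremeasure]
    rw [Measure.pi, toMeasure_apply _ _ hB, OuterMeasure.pi,
      OuterMeasure.boundedBy_eq_ofFunction hempty, OuterMeasure.ofFunction_apply] at hr
    simp only [iInf_lt_iff] at hr
    obtain ⟨t, hBt, htr⟩ := hr
    obtain ⟨δ, hδ, hδr⟩ := ENNReal.exists_pos_sum_of_countable' (tsub_pos_of_lt htr).ne' ℕ
    choose U htU hUo hUδ using fun n =>
      exists_isOpen_superset_measure_pi_le μ (fun i => Function.eval i '' t n) (hδ n).ne'
    refine ⟨⋃ n, U n, hBt.trans (iUnion_mono fun n => (subset_pi_eval_image _ _).trans (htU n)),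
      isOpen_iUnion hUo, ?_⟩
    calc Measure.pi μ (⋃ n, U n)
        ≤ ∑' n, Measure.pi μ (U n) := measure_iUnion_le _
      _ ≤ ∑' n, (piPremeasure (fun i => (μ i).toOuterMeasure) (t n) + δ n) :=
          ENNReal.tsum_le_tsum hUδ
      _ = ∑' n, piPremeasure (fun i => (μ i).toOuterMeasure) (t n) + ∑' n, δ n := ENNReal.tsum_add
      _ < r := by rw [add_comm]; exact lt_tsub_iff_right.1 hδr

lemma exists_isCompact_lt_measure_pi (μ : ∀ i, Measure (X i)) [∀ i, IsProbabilityMeasure (μ i)]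
    [∀ i, (μ i).Regular] {r : ENNReal} (hr : r < 1) :
    ∃ K : Set (∀ i, X i), IsCompact K ∧ r < Measure.pi μ K := by
  have hpow : Tendsto (fun x : ENNReal => x ^ Fintype.card ι) (𝓝[<] 1) (𝓝 1) := by
    simpa using ((ENNReal.continuous_pow (Fintype.card ι)).tendsto 1).mono_left nhdsWithin_le_nhds
  obtain ⟨x, hrx, hx1⟩ := ((hpow.eventually_const_lt hr).and self_mem_nhdsWithin).exists
  choose K _ hK hxK using fun i =>
    isOpen_univ.exists_lt_isCompact (μ := μ i) (hx1.trans_eq measure_univ.symm)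
  refine ⟨univ.pi K, isCompact_univ_pi hK, hrx.trans_le ?_⟩
  rw [Measure.pi_pi, ← Finset.card_univ, ← Finset.prod_const]
  exact Finset.prod_le_prod' fun i _ => (hxK i).le

end ProductRegularity

lemma measure_le_measure_iInter_add_of_isCompact {Y κ : Type*} [TopologicalSpace Y]
    [MeasurableSpace Y] {ν : Measure Y} [ν.OuterRegular] {K : Set Y} (hK : IsCompact K)
    {S : κ → Set Y} (hS : ∀ i, IsClosed (S i)) {δ : ENNReal}
    (hδ : ∀ u : Finset κ, ν (⋂ i ∈ u, S i)ᶜ ≤ δ) :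
    ν K ≤ ν (⋂ i, S i) + δ := by
  suffices h : ∀ U ⊇ ⋂ i, S i, IsOpen U → ν K ≤ ν U + δ by
    rw [(⋂ i, S i).measure_eq_iInf_isOpen ν]
    simp only [ENNReal.iInf_add]
    exact le_iInf fun U => le_iInf fun hU => le_iInf fun hUo => h U hU hUo
  intro U hSU hU
  obtain ⟨u, hu⟩ := (hK.diff hU).elim_finite_subfamily_closed S hS <| by
    rw [← disjoint_iff_inter_eq_empty]
    exact disjoint_sdiff_left.mono_right hSU
  have hcover : K ⊆ U ∪ (⋂ i ∈ u, S i)ᶜ := fun y hy => by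
    by_contra! hy'
    simp only [mem_union, mem_compl_iff, not_or, not_not] at hy'
    exact (hu ▸ ⟨⟨hy, hy'.1⟩, hy'.2⟩ : y ∈ (∅ : Set Y))
  calc ν K ≤ ν (U ∪ (⋂ i ∈ u, S i)ᶜ) := measure_mono hcover
    _ ≤ ν U + ν (⋂ i ∈ u, S i)ᶜ := measure_union_le _ _
    _ ≤ ν U + δ := by gcongr; exact hδ u

section Approximations

variable {X : Type*} {C : Set (Set X)} {d k : ℕ} {ε : ℝ}

lemma freq_eq_sum_indicator_div (k : ℕ) (A : Set X) (p : Fin k → X) :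
    freq k A p = (∑ i, A.indicator 1 (p i)) / k := by
  classical
  rw [freq, Finset.natCast_card_filter]
  simp only [indicator_apply, Pi.one_apply]

lemma continuous_freq [TopologicalSpace X] {A : Set X} (hA : IsClopen A) :
    Continuous (freq k A) := by
  have hind : Continuous (A.indicator (1 : X → ℝ)) :=
    IsClopen.continuous_indicator hA continuous_one
  simp only [funext (freq_eq_sum_indicator_div k A)]
  fun_prop

variable [MeasurableSpace X]

/-- The `k`-tuples whose frequencies approximate `μ` up to `ε` simultaneously on all sets of the
family `C`. -/
def approximations (μ : Measure X) (C : Set (Set X)) (ε : ℝ) (k : ℕ) : Set (Fin k → X) :=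
  {p | ∀ A ∈ C, |freq k A p - (μ A).toReal| ≤ ε}

lemma approximations_eq_iInter (μ : Measure X) (C : Set (Set X)) (ε : ℝ) (k : ℕ) :
    approximations μ C ε k = ⋂ A : C, approximations μ {A.1} ε k := by
  ext p
  simp [approximations]

lemma isClosed_approximations [TopologicalSpace X] (μ : Measure X) (hC : ∀ A ∈ C, IsClopen A)
    (ε : ℝ) (k : ℕ) : IsClosed (approximations μ C ε k) := by
  simp only [approximations, ofPred_forall]
  exact isClosed_biInter fun A hA =>
    isClosed_le ((continuous_freq (hC A hA)).sub continuous_const).abs continuous_const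

lemma measure_compl_approximations_le (μ : Measure X) [IsProbabilityMeasure μ]
    (hVC : ∀ F : Finset X, F.card = d → ¬ Shatters C F) (hCfin : C.Finite)
    (hCmeas : ∀ A ∈ C, MeasurableSet A) (hε : 0 < ε) (hk : 0 < k) :
    Measure.pi (fun _ : Fin k => μ) (approximations μ C ε k)ᶜ ≤
      ENNReal.ofReal (vcBound d k / (k * ε)) := by
  have := hCfin.to_subtype
  have hkε : 0 < k * ε := by positivity
  let g (p : Fin k → X) : ENNReal :=
    ⨆ A : C, ‖∑ i, A.1.indicator 1 (p i) - k * μ.real A.1‖ₑ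
  have hsub : (approximations μ C ε k)ᶜ ⊆ {p | ENNReal.ofReal (k * ε) ≤ g p} := fun p hp => by
    simp only [approximations, mem_compl_iff, mem_ofPred_eq, not_forall, not_le] at hp
    obtain ⟨A, hA, hpA⟩ := hp
    refine le_trans ?_
      (le_iSup (fun A : C => ‖∑ i, A.1.indicator 1 (p i) - k * μ.real A.1‖ₑ) ⟨A, hA⟩)
    have hscale : ∑ i, A.indicator 1 (p i) - k * μ.real A = k * (freq k A p - μ.real A) := by
      rw [freq_eq_sum_indicator_div]
      field_simp
    rw [hscale, Real.enorm_eq_ofReal_abs, abs_mul, Nat.abs_cast]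
    gcongr
    exact hpA.le
  have hexpect := lintegral_iSup_enorm_sum_indicator_sub_le (ι := Fin k) μ hVC
    (A := fun A : C => A.1) (fun A => A.2) fun A => hCmeas A.1 A.2
  rw [Fintype.card_fin] at hexpect
  have hg : Measurable g := by
    have (A : C) : Measurable (A.1.indicator (1 : X → ℝ)) :=
      measurable_one.indicator (hCmeas A.1 A.2)
    fun_prop
  calc Measure.pi (fun _ : Fin k => μ) (approximations μ C ε k)ᶜ
      ≤ Measure.pi (fun _ : Fin k => μ) {p | ENNReal.ofReal (k * ε) ≤ g p} := measure_mono hsub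
    _ ≤ (∫⁻ p, g p ∂(Measure.pi fun _ : Fin k => μ)) / ENNReal.ofReal (k * ε) :=
        meas_ge_le_lintegral_div hg.aemeasurable (ENNReal.ofReal_pos.2 hkε).ne'
          ENNReal.ofReal_ne_top
    _ ≤ ENNReal.ofReal (vcBound d k / (k * ε)) := by
        rw [ENNReal.ofReal_div_of_pos hkε]
        gcongr

variable [TopologicalSpace X] [OpensMeasurableSpace X]

lemma one_le_measure_approximations_add (μ : Measure X) [IsProbabilityMeasure μ] [μ.Regular]
    (hVC : ∀ F : Finset X, F.card = d → ¬ Shatters C F) (hC : ∀ A ∈ C, IsClopen A)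
    (hε : 0 < ε) (hk : 0 < k) :
    1 ≤ Measure.pi (fun _ : Fin k => μ) (approximations μ C ε k) +
      ENNReal.ofReal (vcBound d k / (k * ε)) := by
  refine le_of_forall_lt fun r hr => ?_
  obtain ⟨K, hK, hrK⟩ := exists_isCompact_lt_measure_pi (fun _ : Fin k => μ) hr
  refine hrK.trans_le ?_
  rw [approximations_eq_iInter]
  refine measure_le_measure_iInter_add_of_isCompact hK
    (fun A => isClosed_approximations μ (by simpa using hC A.1 A.2) ε k) fun u => ?_
  have hu : ⋂ A ∈ u, approximations μ {A.1} ε k =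
      approximations μ (Subtype.val '' (u : Set C)) ε k := by
    ext p
    simp [approximations]
  have huC : Subtype.val '' (u : Set C) ⊆ C := by simp
  rw [hu]
  exact measure_compl_approximations_le μ (fun F hF hs => hVC F hF (hs.mono huC))
    (u.finite_toSet.image _) (fun A hA => (hC A (huC hA)).isOpen.measurableSet) hε hk

end Approximations

theorem stmt7_general {X : Type*} [TopologicalSpace X] [MeasurableSpace X]
    [OpensMeasurableSpace X] (μ : Measure X) [IsProbabilityMeasure μ] [μ.Regular]
    (C : Set (Set X)) (hCclopen : ∀ A ∈ C, IsClopen A)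
    (d : ℕ) (hVC : ∀ F : Finset X, F.card = d → ¬ Shatters C F) (ε : ℝ) (hε : 0 < ε) :
    (∀ k, IsClosed (approximations μ C ε k)) ∧
      Tendsto (fun k => Measure.pi (fun _ : Fin k => μ) (approximations μ C ε k)) atTop (𝓝 1) := by
  refine ⟨isClosed_approximations μ hCclopen ε, ?_⟩
  have hbound : Tendsto (fun k : ℕ => vcBound d k / (k * ε)) atTop (𝓝 0) := by
    simpa only [div_div, zero_div] using (tendsto_vcBound_div_natCast d).div_const ε
  have hlower : Tendsto (fun k : ℕ => 1 - ENNReal.ofReal (vcBound d k / (k * ε))) atTop (𝓝 1) := by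
    simpa using ENNReal.Tendsto.sub tendsto_const_nhds
      (ENNReal.tendsto_ofReal hbound) (by simp)
  refine tendsto_of_tendsto_of_tendsto_of_le_of_le' hlower tendsto_const_nhds ?_
    (Eventually.of_forall fun k => prob_le_one)
  filter_upwards [eventually_gt_atTop 0] with k hk
  exact tsub_le_iff_right.2 (one_le_measure_approximations_add μ hVC hCclopen hε hk)

theorem stmt7 {X : Type*} [TopologicalSpace X] [CompactSpace X] [T2Space X]
    [MeasurableSpace X] [BorelSpace X]
    (μ : Measure X) [IsProbabilityMeasure μ] [μ.Regular]
    (C : Set (Set X)) (hCclopen : ∀ A ∈ C, IsClopen A)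
    (d : ℕ) (hVC : ∀ F : Finset X, F.card = d → ¬ Shatters C F) :
    ∀ ε : ℝ, 0 < ε → ∃ k : ℕ, 1 ≤ k ∧ ∃ B : Set (Fin k → X),
      IsClosed B ∧ 0 < (Measure.pi fun _ : Fin k => μ) B ∧
      ∀ p ∈ B, ∀ A ∈ C, |freq k A p - (μ A).toReal| ≤ ε := by
  intro ε hε
  obtain ⟨hclosed, hlim⟩ := stmt7_general μ C hCclopen d hVC ε hε
  obtain ⟨k, hpos, hk⟩ :=
    ((hlim.eventually_const_lt zero_lt_one).and (eventually_ge_atTop 1)).exists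
  exact ⟨k, hk, approximations μ C ε k, hclosed k, hpos, fun p hp => hp⟩
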